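/- Let M be a compact metric space and Φ a continuous flow on M such that lim_{t→±∞} Φ(t,x) exists for every x ∈ M, the fixed-point set M_fix is finite, and the Smale order ≼ on M_fix is antisymmetric. Then the map L ↦ A_L := ⋃_{x ∈ L} W⁻(x) is a bijection from the set of lower sets of (M_fix, ≼) onto the set of attractors of Φ, and it is a lattice isomorphism: A_{L₁ ∪ L₂} = A_{L₁} ∪ A_{L₂} and A_{L₁ ∩ L₂} = A_{L₁} ∩ A_{L₂} for all lower sets L₁, L₂. In particular, every attractor of Φ equals A_L for a unique lower set L ⊆ M_fix. -/

import Mathlib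

open Filter

variable {M : Type*} [MetricSpace M] [CompactSpace M]

/-- The set of fixed points of a flow. -/
def fixedPoints (Φ : Flow ℝ M) : Set M := {x : M | ∀ t : ℝ, Φ t x = x}

/-- The stable set `W⁺(A) = {x | dist(Φ(t,x), A) → 0 as t → +∞}` of a set `A`
(stated with the extended distance, so that `W⁺(∅) = ∅` as in the paper). -/
def wPlus (Φ : Flow ℝ M) (A : Set M) : Set M :=
  {x : M | Tendsto (fun t : ℝ => EMetric.infEdist (Φ t x) A) atTop (nhds 0)}

/-- The unstable set `W⁻(A) = {x | dist(Φ(t,x), A) → 0 as t → −∞}` of a set `A`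
(stated with the extended distance, so that `W⁻(∅) = ∅` as in the paper). -/
def wMinus (Φ : Flow ℝ M) (A : Set M) : Set M :=
  {x : M | Tendsto (fun t : ℝ => EMetric.infEdist (Φ t x) A) atBot (nhds 0)}

/-- Every flow line has a sink and a source: `lim_{t→±∞} Φ(t,x)` exists for all `x`. -/
def allOrbitsConverge (Φ : Flow ℝ M) : Prop :=
  ∀ x : M, (∃ y : M, Tendsto (fun t : ℝ => Φ t x) atTop (nhds y)) ∧
    (∃ y : M, Tendsto (fun t : ℝ => Φ t x) atBot (nhds y))

/-- An attractor: a compact invariant set admitting a neighborhood `U` with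
`Φ(t, cl U) ⊆ int U` for all `t > 0` and `A = ⋂_{t ≥ 0} Φ(t, U)`. -/
def IsAttractor (Φ : ℝ → M → M) (A : Set M) : Prop :=
  IsCompact A ∧ (∀ t : ℝ, Φ t '' A = A) ∧
    ∃ U : Set M, A ⊆ interior U ∧ (∀ t > (0 : ℝ), Φ t '' closure U ⊆ interior U) ∧
      A = ⋂ t ∈ Set.Ici (0 : ℝ), Φ t '' U

/-- The one-step Smale relation on fixed points: `x ≺ y` iff `W⁻(y) ∩ W⁺(x) ≠ ∅`. -/
def smaleRel (Φ : Flow ℝ M) (x y : M) : Prop :=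
  x ∈ fixedPoints Φ ∧ y ∈ fixedPoints Φ ∧ (wMinus Φ {y} ∩ wPlus Φ {x}).Nonempty

/-- The Smale order: the reflexive-transitive closure of the one-step Smale relation. -/
def smaleLe (Φ : Flow ℝ M) : M → M → Prop :=
  Relation.ReflTransGen (smaleRel Φ)

/-- A lower set of fixed points with respect to the Smale order. -/
def IsSmaleLowerSet (Φ : Flow ℝ M) (L : Set M) : Prop :=
  L ⊆ fixedPoints Φ ∧ ∀ y ∈ L, ∀ x ∈ fixedPoints Φ, smaleLe Φ x y → x ∈ L

/-! The mechanism is Conley's: if `N` is closed and every point whose backward orbit stays in `N`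
lies in the interior of `N`, then these points form an attractor, with a sublevel region of a
decreasing barrier as trapping neighborhood. Once `A_L` is known to be closed, any closed
neighborhood `N` of it that misses the fixed points outside `L` has this property, because a
backward orbit kept in `N` can only come from `L`.

So the point is that `A_L` is closed. Otherwise Zorn's lemma gives a minimal closed invariant set
`K` for which `A_L ∩ K` is not closed. It applies because, if `A_L` meets the intersection of a
chain in a closed set, then by compactness a closed neighborhood `N` of this set and of `L` already
isolates the intersection of `A_L` with some member of the chain, which is therefore closed too.
An orbit in `A_L` starts and ends at `L`, hence is close to `L` outside a bounded set of times,
while any other orbit is close to the fixed points outside `L` from some time backwards. Bounding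
these times by `n` covers the space by countably many closed sets, so by Baire's theorem one such
bound holds on a nonempty relatively open piece of `K`. The orbits in `A_L` that meet this piece
lie in a closed subset of `A_L`, and the orbits in `K` that avoid it form a smaller closed invariant
set, so `A_L ∩ K` is closed after all.

Conversely an attractor contains the unstable sets of its points, so it is `A_L` for the set `L` of
its fixed points.
-/

open Set Topology

section Topology

variable {X T : Type*} [TopologicalSpace X] [TopologicalSpace T]

theorem isOpen_setOf_forall_mem_of_isCompact {J : Set T} (hJ : IsCompact J) {O : Set (T × X)}
    (hO : IsOpen O) : IsOpen {x | ∀ t ∈ J, (t, x) ∈ O} :=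
  isOpen_iff_mem_nhds.2 fun _ hx => hJ.eventually_forall_of_forall_eventually fun t ht =>
    continuous_swap.continuousAt.eventually (hO.mem_nhds (hx t ht))

theorem exists_isClosed_subset_interior_disjoint [NormalSpace X] {C Q : Set X} (hC : IsClosed C)
    (hQ : IsClosed Q) (hCQ : Disjoint C Q) :
    ∃ N, IsClosed N ∧ C ⊆ interior N ∧ Disjoint N Q := by
  obtain ⟨O, hO, hCO, hOQ⟩ :=
    normal_exists_closure_subset hC hQ.isOpen_compl hCQ.subset_compl_right
  exact ⟨closure O, isClosed_closure, hCO.trans (interior_maximal subset_closure hO),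
    disjoint_left.2 hOQ⟩

theorem exists_first_exit [ConditionallyCompleteLinearOrder T] [OrderTopology T] {γ : T → X}
    (hγ : Continuous γ) {O : Set X} (hO : IsOpen O) {a b : T} (hab : a ≤ b) (hb : γ b ∉ O) :
    ∃ s ≥ a, γ s ∉ O ∧ ∀ t ∈ Ico a s, γ t ∈ O := by
  have hclosed : IsClosed (Ici a ∩ γ ⁻¹' Oᶜ) := isClosed_Ici.inter (hO.isClosed_compl.preimage hγ)
  obtain ⟨⟨has, hs⟩, hmin⟩ := hclosed.isLeast_csInf ⟨b, hab, hb⟩ ⟨a, fun _ ht => ht.1⟩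
  exact ⟨_, has, hs, fun t ht => by_contra fun hγt => (hmin ⟨ht.1, hγt⟩).not_gt ht.2⟩

theorem exists_isOpen_inter_subset_of_iUnion_eq_univ [CompactSpace X] [T2Space X] {ι : Type*}
    [Countable ι] {K : Set X} (hK : IsClosed K) (hne : K.Nonempty) {F : ι → Set X}
    (hF : ∀ i, IsClosed (F i)) (hcover : ⋃ i, F i = univ) :
    ∃ i O, IsOpen O ∧ (K ∩ O).Nonempty ∧ K ∩ O ⊆ F i := by
  have : CompactSpace K := isCompact_iff_compactSpace.1 hK.isCompact
  have : Nonempty K := hne.to_subtype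
  obtain ⟨i, x, hx⟩ := nonempty_interior_of_iUnion_of_closed
    (fun i => (hF i).preimage (continuous_subtype_val (p := (· ∈ K))))
    (by rw [← preimage_iUnion, hcover, preimage_univ])
  obtain ⟨V, hVF, hV, hxV⟩ := mem_interior.1 hx
  obtain ⟨O, hO, rfl⟩ := isOpen_induced_iff.1 hV
  exact ⟨i, O, hO, ⟨x, x.2, hxV⟩, fun y hy => hVF (show (⟨y, hy.1⟩ : K) ∈ _ from hy.2)⟩

end Topology

section TrappedSet

variable {τ X : Type*} [TopologicalSpace τ] [TopologicalSpace X]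

/-- The points whose orbit stays in `N` during the set of times `J`. For `J = Iio 0` and closed `N`
this is the set of points with full backward orbit in `N`; excluding the time `0` makes the first
exit point of an orbit from an open subset of `N` a member without a limiting argument. -/
def trappedSet [AddZero τ] (Φ : Flow τ X) (J : Set τ) (N : Set X) : Set X :=
  {x | ∀ t ∈ J, Φ t x ∈ N}

theorem trappedSet_mono [AddZero τ] (Φ : Flow τ X) {I J : Set τ} {N N' : Set X} (hJI : J ⊆ I)
    (hN : N ⊆ N') : trappedSet Φ I N ⊆ trappedSet Φ J N' :=
  fun _ hx t ht => hN (hx t (hJI ht))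

theorem isClosed_trappedSet [AddZero τ] (Φ : Flow τ X) (J : Set τ) {N : Set X} (hN : IsClosed N) :
    IsClosed (trappedSet Φ J N) := by
  simp only [trappedSet, ofPred_forall]
  exact isClosed_biInter fun t _ => hN.preimage (Φ.continuous_toFun t)

theorem isOpen_trappedSet [AddZero τ] (Φ : Flow τ X) {J : Set τ} {N : Set X} (hJ : IsCompact J)
    (hN : IsOpen N) : IsOpen (trappedSet Φ J N) :=
  isOpen_setOf_forall_mem_of_isCompact hJ (hN.preimage Φ.cont')

theorem isInvariant_trappedSet_univ [AddZero τ] (Φ : Flow τ X) (N : Set X) :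
    IsInvariant Φ (trappedSet Φ univ N) := fun t x hx s _ => by
  rw [← Φ.map_add]
  exact hx _ trivial

theorem exists_trappedSet_subset_of_monotone [AddZero τ] [CompactSpace X] (Φ : Flow τ X)
    {J : ℕ → Set τ} (hJ : Monotone J) {N V : Set X} (hN : IsClosed N) (hV : IsOpen V)
    (h : trappedSet Φ (⋃ n, J n) N ⊆ V) : ∃ n, trappedSet Φ (J n) N ⊆ V := by
  have hanti : Antitone fun n => trappedSet Φ (J n) N :=
    fun _ _ hmn => trappedSet_mono Φ (hJ hmn) Subset.rfl
  refine exists_subset_nhds_of_compactSpace hanti.directed_ge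
    (fun n => isClosed_trappedSet Φ (J n) hN) fun x hx => hV.mem_nhds (h fun t ht => ?_)
  obtain ⟨n, hn⟩ := mem_iUnion.1 ht
  exact mem_iInter.1 hx n t hn

theorem isClosed_trappedSet_univ_image_union [AddZero τ] [CompactSpace X] [T2Space X]
    (Φ : Flow τ X) {C : Set τ} {F B : Set X} (hC : IsCompact C) (hF : IsClosed F)
    (hB : IsClosed B) : IsClosed (trappedSet Φ univ (image2 Φ C F ∪ B)) := by
  have hCF : IsCompact (image2 Φ C F) :=
    image_uncurry_prod Φ.toFun C F ▸ (hC.prod hF.isCompact).image Φ.cont'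
  exact isClosed_trappedSet Φ univ (hCF.isClosed.union hB)

theorem mem_trappedSet_univ_image_union [AddGroup τ] (Φ : Flow τ X) {C : Set τ} {F B : Set X}
    (hF : F ⊆ trappedSet Φ Cᶜ B) {x : X} {t : τ} (hx : Φ t x ∈ F) :
    x ∈ trappedSet Φ univ (image2 Φ C F ∪ B) := fun s _ => by
  rw [← sub_add_cancel s t, Φ.map_add]
  by_cases hs : s - t ∈ C
  · exact Or.inl (mem_image2_of_mem hs hx)
  · exact Or.inr (hF hx _ hs)

theorem mem_of_apply_mem_of_isInvariant [AddGroup τ] {Φ : Flow τ X} {A : Set X}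
    (hA : IsInvariant Φ A) {t : τ} {x : X} (hx : Φ t x ∈ A) : x ∈ A := by
  simpa [← Φ.map_add] using hA (-t) hx

end TrappedSet

section Attractor

variable {X : Type*} [TopologicalSpace X] (Φ : Flow ℝ X)

theorem apply_mem_trappedSet_Iio {N : Set X} {x : X} (hx : x ∈ trappedSet Φ (Iio 0) N) {t : ℝ}
    (ht : t ≤ 0) : Φ t x ∈ trappedSet Φ (Iio 0) N := fun s hs => by
  rw [← Φ.map_add]
  exact hx _ (add_neg_of_neg_of_nonpos hs ht)

variable {Φ} {N : Set X}

theorem trappedSet_interior_subset_trappedSet_Ici {k : ℝ}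
    (hN : trappedSet Φ (Ico (-k) 0) N ⊆ interior N) :
    trappedSet Φ (Icc (-k) 0) (interior N) ⊆ trappedSet Φ (Ici 0) (interior N) := by
  intro x hx b (hb : 0 ≤ b)
  by_contra hbN
  obtain ⟨s, hs, hsN, hexit⟩ := exists_first_exit (γ := fun t => Φ t x) (by fun_prop)
    isOpen_interior hb hbN
  refine hsN (hN fun t ht => ?_)
  rw [← Φ.map_add]
  rcases lt_or_ge (t + s) 0 with hts | hts
  · exact interior_subset (hx _ ⟨by linarith [ht.1], hts.le⟩)
  · exact interior_subset (hexit _ ⟨hts, by linarith [ht.2]⟩)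

theorem exists_trappedSet_Ico_subset [CompactSpace X] {V : Set X} (hN : IsClosed N) (hV : IsOpen V)
    (h : trappedSet Φ (Iio 0) N ⊆ V) : ∃ k : ℝ, trappedSet Φ (Ico (-k) 0) N ⊆ V := by
  have hmono : Monotone fun n : ℕ => Ico (-n : ℝ) 0 :=
    fun m n hmn => Ico_subset_Ico_left (neg_le_neg (Nat.cast_le.2 hmn))
  have hunion : ⋃ n : ℕ, Ico (-n : ℝ) 0 = Iio 0 := by
    ext t
    simp only [mem_iUnion, mem_Ico, mem_Iio, exists_and_right, and_iff_right_iff_imp]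
    exact fun _ => (exists_nat_ge (-t)).imp fun n hn => neg_le.1 hn
  obtain ⟨n, hn⟩ := exists_trappedSet_subset_of_monotone Φ hmono hN hV (hunion ▸ h)
  exact ⟨n, hn⟩

theorem trappedSet_Iio_subset_interior_trappedSet_Ici [CompactSpace X] (hN : IsClosed N)
    (hNint : trappedSet Φ (Iio 0) N ⊆ interior N) :
    trappedSet Φ (Iio 0) N ⊆ interior (trappedSet Φ (Ici 0) N) := by
  obtain ⟨k, hk⟩ := exists_trappedSet_Ico_subset hN isOpen_interior hNint
  have hstay : trappedSet Φ (Icc (-k) 0) (interior N) ⊆ trappedSet Φ (Ici 0) N :=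
    (trappedSet_interior_subset_trappedSet_Ici hk).trans
      (trappedSet_mono Φ Subset.rfl interior_subset)
  exact fun x hx => interior_maximal hstay (isOpen_trappedSet Φ isCompact_Icc isOpen_interior)
    fun t ht => hNint (apply_mem_trappedSet_Iio Φ hx ht.2)

theorem isInvariant_trappedSet_Iio [CompactSpace X] (hN : IsClosed N)
    (hNint : trappedSet Φ (Iio 0) N ⊆ interior N) : IsInvariant Φ (trappedSet Φ (Iio 0) N) := by
  intro t x hx s _
  rw [← Φ.map_add]
  rcases lt_or_ge (s + t) 0 with hst | hst
  · exact hx _ hst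
  · exact interior_subset (trappedSet_Iio_subset_interior_trappedSet_Ici hN hNint hx) _ hst

theorem exists_forall_apply_mem_of_trappedSet_subset [CompactSpace X] {V : Set X}
    (hN : IsClosed N) (hV : IsOpen V) (h : trappedSet Φ (Iio 0) N ⊆ V) :
    ∃ k : ℝ, ∀ x ∈ trappedSet Φ (Ici 0) N, ∀ t ≥ k, Φ t x ∈ V := by
  obtain ⟨k, hk⟩ := exists_trappedSet_Ico_subset hN hV h
  refine ⟨k, fun x hx t ht => hk fun s hs => ?_⟩
  rw [← Φ.map_add]
  exact hx _ (mem_Ici.2 (by linarith [hs.1]))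

theorem isOpen_setOf_forall_apply_lt {R : Set X} {g : X → ℝ} {w : ℝ → ℝ} {k : ℝ}
    (hg : Continuous g) (hw : Continuous w) (hR : ∀ x ∉ interior R, w 0 ≤ g x)
    (hk : ∀ x ∈ R, ∀ t ≥ k, g (Φ t x) < w t) : IsOpen {x | ∀ t ≥ 0, g (Φ t x) < w t} := by
  have heq : {x | ∀ t ≥ 0, g (Φ t x) < w t} =
      interior R ∩ {x | ∀ t ∈ Icc 0 k, (t, x) ∈ {q : ℝ × X | g (Φ q.1 q.2) < w q.1}} := by
    ext x
    refine ⟨fun hx => ⟨?_, fun t ht => hx t ht.1⟩, fun ⟨hxR, hx⟩ t ht => ?_⟩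
    · by_contra hxR
      have := hx 0 le_rfl
      rw [Φ.map_zero_apply] at this
      exact (hR x hxR).not_gt this
    · rcases le_total t k with htk | htk
      · exact hx t ⟨ht, htk⟩
      · exact hk x (interior_subset hxR) t htk
  rw [heq]
  exact isOpen_interior.inter (isOpen_setOf_forall_mem_of_isCompact isCompact_Icc
    (isOpen_lt (by fun_prop) (by fun_prop)))

theorem exists_isClosed_mapsTo_interior [NormalSpace X] {A R : Set X} (hA : IsClosed A)
    (hAinv : IsForwardInvariant Φ A) (hAR : A ⊆ interior R)
    (habs : ∀ V, IsOpen V → A ⊆ V → ∃ k : ℝ, ∀ x ∈ R, ∀ t ≥ k, Φ t x ∈ V) :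
    ∃ U, IsClosed U ∧ A ⊆ interior U ∧ U ⊆ R ∧ ∀ t > 0, MapsTo (Φ t) U (interior U) := by
  obtain ⟨g, hg0, hg1, -⟩ := exists_continuous_zero_one_of_isClosed hA
    isOpen_interior.isClosed_compl (disjoint_compl_right_iff_subset.2 hAR)
  obtain ⟨k, hk⟩ := habs {x | g x < 1 / 4} (isOpen_lt g.continuous continuous_const)
    fun x hx => by simp [hg0 hx]
  -- The region `g (Φ t x) ≤ w t` for all `t ≥ 0` is mapped strictly into itself because `w`
  -- strictly decreases; `w > 1 / 4` makes the strict condition automatic for large `t`, hence open.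
  let w : ℝ → ℝ := fun t => (1 + Real.exp (-t)) / 4
  have hw_cont : Continuous w := by fun_prop
  have hw_anti : StrictAnti w := fun s t hst => by
    have : Real.exp (-t) < Real.exp (-s) := Real.exp_lt_exp.2 (neg_lt_neg hst)
    simp only [w]
    linarith
  have hw_gt (t : ℝ) : 1 / 4 < w t := by
    have : 0 < Real.exp (-t) := Real.exp_pos _
    simp only [w]
    linarith
  have hw_zero : w 0 < 1 := by norm_num [w]
  let U : Set X := {x | ∀ t ≥ 0, g (Φ t x) ≤ w t}
  let U' : Set X := {x | ∀ t ≥ 0, g (Φ t x) < w t}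
  have hU'_open : IsOpen U' := isOpen_setOf_forall_apply_lt g.continuous hw_cont
    (fun x hx => by rw [hg1 hx]; exact hw_zero.le)
    fun x hx t ht => (hk x hx t ht).trans (hw_gt t)
  have hU'U : U' ⊆ interior U := interior_maximal (fun x hx t ht => (hx t ht).le) hU'_open
  refine ⟨U, ?_, fun x hx => hU'U fun t ht => ?_, fun x hx => ?_, fun s hs x hx =>
    hU'U fun t ht => ?_⟩
  · simp only [U, ofPred_forall]
    exact isClosed_biInter fun t _ => isClosed_le (by fun_prop) continuous_const
  · simpa [hg0 (hAinv ht hx)] using one_div_pos.2 four_pos |>.trans (hw_gt t)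
  · by_contra hxR
    have hgx : g x = 1 := hg1 fun h => hxR (interior_subset h)
    have := hx 0 le_rfl
    rw [Φ.map_zero_apply, hgx] at this
    exact hw_zero.not_ge this
  · rw [← Φ.map_add]
    exact (hx _ (by positivity)).trans_lt (hw_anti (lt_add_of_pos_right t hs))

end Attractor

section MorsePair

variable {X : Type*} [TopologicalSpace X]

/-- The unstable set `W⁻(P)`, with convergence to `P` expressed through the filter of its
neighborhoods. -/
def unstableSet (Φ : Flow ℝ X) (P : Set X) : Set X := {x | Tendsto (Φ · x) atBot (𝓝ˢ P)}

/-- The stable set `W⁺(P)`, with convergence to `P` expressed through the filter of its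
neighborhoods. -/
def stableSet (Φ : Flow ℝ X) (P : Set X) : Set X := {x | Tendsto (Φ · x) atTop (𝓝ˢ P)}

/-- A decomposition of the limit behavior of a flow into a lower part `P` and an upper part `Q`:
every orbit emanates from `P` or from `Q`, and no orbit leads from `P` to anything but `P`.
This is the two-element Morse decomposition attached to an attractor. -/
structure IsMorsePair (Φ : Flow ℝ X) (P Q : Set X) : Prop where
  isClosed_lower : IsClosed P
  isClosed_upper : IsClosed Q
  disjoint : Disjoint P Q
  isInvariant_upper : IsInvariant Φ Q
  unstableSet_union : unstableSet Φ P ∪ unstableSet Φ Q = univ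
  unstableSet_subset_stableSet : unstableSet Φ P ⊆ stableSet Φ P

theorem isInvariant_unstableSet (Φ : Flow ℝ X) (P : Set X) : IsInvariant Φ (unstableSet Φ P) := by
  intro s x (hx : Tendsto (Φ · x) atBot (𝓝ˢ P))
  have := hx.comp (tendsto_atBot_add_const_right _ s tendsto_id)
  simpa only [unstableSet, mem_ofPred_eq, Function.comp_def, id, Φ.map_add] using this

theorem disjoint_trappedSet_Iio_unstableSet (Φ : Flow ℝ X) {N Q : Set X} (hN : IsClosed N)
    (hNQ : Disjoint N Q) (c : ℝ) : Disjoint (trappedSet Φ (Iio c) N) (unstableSet Φ Q) := by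
  refine disjoint_left.2 fun x hxN (hxQ : Tendsto (Φ · x) atBot (𝓝ˢ Q)) => ?_
  have hleave : ∀ᶠ t in atBot, Φ t x ∈ Nᶜ :=
    hxQ (hN.isOpen_compl.mem_nhdsSet.2 hNQ.subset_compl_left)
  obtain ⟨t, htN, htc⟩ := (hleave.and (eventually_lt_atBot c)).exists
  exact htN (hxN t htc)

theorem unstableSet_inter_subset_trappedSet {Φ : Flow ℝ X} {P K N : Set X} (hK : IsInvariant Φ K)
    (hPN : P ⊆ interior N) (hKN : trappedSet Φ (Iio 0) N ∩ K ⊆ interior N) :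
    unstableSet Φ P ∩ K ⊆ trappedSet Φ univ N := by
  rintro x ⟨hxP : Tendsto (Φ · x) atBot (𝓝ˢ P), hxK⟩ b -
  by_contra hbN
  have hev : ∀ᶠ t in atBot, Φ t x ∈ interior N := hxP (isOpen_interior.mem_nhdsSet.2 hPN)
  obtain ⟨a, ha⟩ := eventually_atBot.1 hev
  have hab : a ≤ b := le_of_not_ge fun hba => hbN (interior_subset (ha b hba))
  obtain ⟨s, -, hsN, hexit⟩ := exists_first_exit (γ := fun t => Φ t x) (by fun_prop)
    isOpen_interior hab fun h => hbN (interior_subset h)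
  refine hsN (hKN ⟨fun t ht => ?_, hK s hxK⟩)
  rw [← Φ.map_add]
  rcases le_total (t + s) a with hts | hts
  · exact interior_subset (ha _ hts)
  · exact interior_subset (hexit _ ⟨hts, add_lt_of_neg_left s ht⟩)

theorem exists_mem_trappedSet_compl_closedBall {Φ : Flow ℝ X} {P B : Set X} {x : X}
    (hbot : x ∈ unstableSet Φ P) (htop : x ∈ stableSet Φ P) (hB : P ⊆ interior B) :
    ∃ n : ℕ, x ∈ trappedSet Φ (Metric.closedBall 0 n)ᶜ B := by
  have htendsto : Tendsto (Φ · x) (cocompact ℝ) (𝓝ˢ P) := by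
    rw [cocompact_eq_atBot_atTop]
    exact tendsto_sup.2 ⟨hbot, htop⟩
  rw [← Metric.cobounded_eq_cocompact] at htendsto
  obtain ⟨r, -, hr⟩ := (Metric.hasBasis_cobounded_compl_closedBall (0 : ℝ)).eventually_iff.1
    (htendsto.eventually (subset_interior_iff_mem_nhdsSet.1 hB))
  obtain ⟨n, hn⟩ := exists_nat_ge r
  exact ⟨n, fun t ht => hr (compl_subset_compl.2 (Metric.closedBall_subset_closedBall hn) ht)⟩

theorem exists_mem_trappedSet_Iio {Φ : Flow ℝ X} {Q B : Set X} {x : X}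
    (hx : x ∈ unstableSet Φ Q) (hB : Q ⊆ interior B) :
    ∃ n : ℕ, x ∈ trappedSet Φ (Iio (-n : ℝ)) B := by
  obtain ⟨c, hc⟩ := eventually_atBot.1 (hx (subset_interior_iff_mem_nhdsSet.1 hB))
  obtain ⟨n, hn⟩ := exists_nat_ge (-c)
  exact ⟨n, fun t ht => hc t (by linarith [mem_Iio.1 ht])⟩

namespace IsMorsePair

variable {Φ : Flow ℝ X} {P Q : Set X}

theorem disjoint_unstableSet (h : IsMorsePair Φ P Q) : Disjoint (unstableSet Φ P) Q :=
  ((disjoint_trappedSet_Iio_unstableSet Φ h.isClosed_upper h.disjoint.symm 0).mono_left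
    fun _ hx t _ => h.isInvariant_upper t hx).symm

theorem trappedSet_Iio_subset_unstableSet (h : IsMorsePair Φ P Q) {N : Set X} (hN : IsClosed N)
    (hNQ : Disjoint N Q) (c : ℝ) : trappedSet Φ (Iio c) N ⊆ unstableSet Φ P :=
  (disjoint_trappedSet_Iio_unstableSet Φ hN hNQ c).subset_left_of_subset_union
    (h.unstableSet_union ▸ subset_univ _)

theorem exists_isClosed_nhd [NormalSpace X] (h : IsMorsePair Φ P Q) {K : Set X}
    (hK : IsClosed (unstableSet Φ P ∩ K)) :
    ∃ N, IsClosed N ∧ P ⊆ interior N ∧ unstableSet Φ P ∩ K ⊆ interior N ∧ Disjoint N Q := by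
  obtain ⟨N, hN, hsub, hNQ⟩ := exists_isClosed_subset_interior_disjoint
    (h.isClosed_lower.union hK) h.isClosed_upper
    (h.disjoint.union_left (h.disjoint_unstableSet.mono_left inter_subset_left))
  exact ⟨N, hN, subset_union_left.trans hsub, subset_union_right.trans hsub, hNQ⟩

theorem isClosed_unstableSet_inter_of_trappedSet_subset (h : IsMorsePair Φ P Q) {K N : Set X}
    (hK : IsClosed K) (hKinv : IsInvariant Φ K) (hN : IsClosed N) (hPN : P ⊆ interior N)
    (hNQ : Disjoint N Q) (hKN : trappedSet Φ (Iio 0) N ∩ K ⊆ interior N) :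
    IsClosed (unstableSet Φ P ∩ K) := by
  have heq : unstableSet Φ P ∩ K = trappedSet Φ (Iio 0) N ∩ K := by
    refine Subset.antisymm (subset_inter ?_ inter_subset_right)
      (inter_subset_inter_left K (h.trappedSet_Iio_subset_unstableSet hN hNQ 0))
    exact (unstableSet_inter_subset_trappedSet hKinv hPN hKN).trans
      (trappedSet_mono Φ (subset_univ _) Subset.rfl)
  rw [heq]
  exact (isClosed_trappedSet Φ (Iio 0) hN).inter hK

variable [CompactSpace X] [T2Space X]

theorem exists_isClosed_unstableSet_inter_of_isChain (h : IsMorsePair Φ P Q) {c : Set (Set X)}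
    (hne : c.Nonempty) (hchain : IsChain (· ⊆ ·) c) (hclosed : ∀ K ∈ c, IsClosed K)
    (hinv : ∀ K ∈ c, IsInvariant Φ K) (hlim : IsClosed (unstableSet Φ P ∩ ⋂₀ c)) :
    ∃ K ∈ c, IsClosed (unstableSet Φ P ∩ K) := by
  obtain ⟨N, hN, hPN, hcN, hNQ⟩ := h.exists_isClosed_nhd hlim
  have : Nonempty c := hne.to_subtype
  have hdir : Directed (· ⊇ ·) fun K : c => trappedSet Φ (Iio 0) N ∩ K := fun K L =>
    (hchain.total K.2 L.2).elim
      (fun hKL => ⟨K, Subset.rfl, inter_subset_inter_right _ hKL⟩)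
      fun hLK => ⟨L, inter_subset_inter_right _ hLK, Subset.rfl⟩
  obtain ⟨⟨K, hK⟩, hKN⟩ := exists_subset_nhds_of_compactSpace hdir
    (fun K => (isClosed_trappedSet Φ (Iio 0) hN).inter (hclosed K K.2))
    (U := interior N) fun x hx => isOpen_interior.mem_nhds <| hcN
      ⟨h.trappedSet_Iio_subset_unstableSet hN hNQ 0 (mem_iInter.1 hx this.some).1,
        fun K hK => (mem_iInter.1 hx ⟨K, hK⟩).2⟩
  exact ⟨K, hK, h.isClosed_unstableSet_inter_of_trappedSet_subset (hclosed K hK) (hinv K hK)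
    hN hPN hNQ hKN⟩

theorem exists_isClosed_subset_unstableSet (h : IsMorsePair Φ P Q) {C : Set ℝ} {F B : Set X}
    (hC : IsCompact C) (hF : IsClosed F) (hB : IsClosed B) (hBQ : Disjoint B Q)
    (hFB : F ⊆ trappedSet Φ Cᶜ B) :
    ∃ S, IsClosed S ∧ S ⊆ unstableSet Φ P ∧ ∀ x t, Φ t x ∈ F → x ∈ S := by
  have hFP : F ⊆ unstableSet Φ P := by
    obtain ⟨c, hc⟩ := hC.bddBelow
    refine (hFB.trans (trappedSet_mono Φ (fun t ht htC => ?_) Subset.rfl)).trans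
      (h.trappedSet_Iio_subset_unstableSet hB hBQ c)
    exact (hc htC).not_gt ht
  refine ⟨_, isClosed_trappedSet_univ_image_union Φ hC hF hB, fun x hx => ?_,
    fun x t => mem_trappedSet_univ_image_union Φ hFB⟩
  by_cases hxB : x ∈ trappedSet Φ (Iio 0) B
  · exact h.trappedSet_Iio_subset_unstableSet hB hBQ 0 hxB
  · obtain ⟨s, -, hsB⟩ : ∃ s ∈ Iio 0, Φ s x ∉ B := by simpa [trappedSet] using hxB
    obtain ⟨c, -, z, hz, hcz⟩ := (hx s trivial).resolve_right hsB
    refine mem_of_apply_mem_of_isInvariant (isInvariant_unstableSet Φ P) (t := s) ?_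
    rw [← hcz]
    exact isInvariant_unstableSet Φ P c (hFP hz)

theorem exists_countable_closed_cover (h : IsMorsePair Φ P Q) :
    ∃ F : ℕ ⊕ ℕ → Set X, (∀ i, IsClosed (F i)) ∧ ⋃ i, F i = univ ∧
      ∀ i, ∃ S, IsClosed S ∧ S ⊆ unstableSet Φ P ∧
        ∀ x ∈ unstableSet Φ P, ∀ t, Φ t x ∈ F i → x ∈ S := by
  obtain ⟨B, hB, hPB, hBQ⟩ :=
    exists_isClosed_subset_interior_disjoint h.isClosed_lower h.isClosed_upper h.disjoint
  obtain ⟨B', hB', hQB', hB'P⟩ :=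
    exists_isClosed_subset_interior_disjoint h.isClosed_upper h.isClosed_lower h.disjoint.symm
  refine ⟨Sum.elim (fun n => trappedSet Φ (Metric.closedBall 0 n)ᶜ B)
    fun n => trappedSet Φ (Iio (-n : ℝ)) B', ?_, ?_, ?_⟩
  · rintro (n | n)
    · exact isClosed_trappedSet Φ _ hB
    · exact isClosed_trappedSet Φ _ hB'
  · refine eq_univ_of_forall fun x => mem_iUnion.2 ?_
    rcases h.unstableSet_union.ge (mem_univ x) with hx | hx
    · obtain ⟨n, hn⟩ :=
        exists_mem_trappedSet_compl_closedBall hx (h.unstableSet_subset_stableSet hx) hPB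
      exact ⟨.inl n, hn⟩
    · obtain ⟨n, hn⟩ := exists_mem_trappedSet_Iio hx hQB'
      exact ⟨.inr n, hn⟩
  · rintro (n | n)
    · obtain ⟨S, hS, hSP, hFS⟩ := h.exists_isClosed_subset_unstableSet
        (isCompact_closedBall 0 (n : ℝ)) (isClosed_trappedSet Φ _ hB) hB hBQ Subset.rfl
      exact ⟨S, hS, hSP, fun x _ => hFS x⟩
    · exact ⟨∅, isClosed_empty, empty_subset _, fun x hx t hxt =>
        (disjoint_trappedSet_Iio_unstableSet Φ hB' hB'P _).ne_of_mem hxt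
          (isInvariant_unstableSet Φ P t hx) rfl⟩

theorem isClosed_unstableSet_inter_of_forall_ssubset (h : IsMorsePair Φ P Q) {K : Set X}
    (hK : IsClosed K) (hKinv : IsInvariant Φ K)
    (hmin : ∀ K' ⊂ K, IsClosed K' → IsInvariant Φ K' → IsClosed (unstableSet Φ P ∩ K')) :
    IsClosed (unstableSet Φ P ∩ K) := by
  rcases K.eq_empty_or_nonempty with rfl | hne
  · simp
  obtain ⟨F, hF, hcover, hFS⟩ := h.exists_countable_closed_cover
  obtain ⟨i, O, hO, ⟨x₀, hx₀K, hx₀O⟩, hOF⟩ :=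
    exists_isOpen_inter_subset_of_iUnion_eq_univ hK hne hF hcover
  obtain ⟨S, hS, hSP, hFS⟩ := hFS i
  let K' : Set X := K ∩ trappedSet Φ univ Oᶜ
  have hK'K : K' ⊂ K := ⟨inter_subset_left, fun hKK' =>
    (hKK' hx₀K).2 0 trivial (by rwa [Φ.map_zero_apply])⟩
  have hK' : IsClosed (unstableSet Φ P ∩ K') :=
    hmin K' hK'K (hK.inter (isClosed_trappedSet Φ univ hO.isClosed_compl))
      fun t => (hKinv t).inter_inter (isInvariant_trappedSet_univ Φ Oᶜ t)
  have heq : unstableSet Φ P ∩ K = (unstableSet Φ P ∩ K') ∪ (S ∩ K) := by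
    refine Subset.antisymm (fun x hx => ?_) (union_subset
      (inter_subset_inter_right _ hK'K.1) (inter_subset_inter_left K hSP))
    by_cases hxO : x ∈ trappedSet Φ univ Oᶜ
    · exact Or.inl ⟨hx.1, hx.2, hxO⟩
    · obtain ⟨t, ht⟩ : ∃ t, Φ t x ∈ O := by simpa [trappedSet] using hxO
      exact Or.inr ⟨hFS x hx.1 t (hOF ⟨hKinv t hx.2, ht⟩), hx.2⟩
  rw [heq]
  exact hK'.union (hS.inter hK)

theorem isClosed_unstableSet (h : IsMorsePair Φ P Q) : IsClosed (unstableSet Φ P) := by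
  by_contra hnot
  let bad : Set (Set X) := {K | IsClosed K ∧ IsInvariant Φ K ∧ ¬ IsClosed (unstableSet Φ P ∩ K)}
  have hbad_chain : ∀ c ⊆ bad, IsChain (· ⊆ ·) c → c.Nonempty → ∃ lb ∈ bad, ∀ K ∈ c, lb ⊆ K := by
    refine fun c hc hchain hne => ⟨⋂₀ c, ⟨isClosed_sInter fun K hK => (hc hK).1,
      fun t x hx K hK => (hc hK).2.1 t (hx K hK), fun hlim => ?_⟩, fun K hK =>
      sInter_subset_of_mem hK⟩
    obtain ⟨K, hK, hKclosed⟩ := h.exists_isClosed_unstableSet_inter_of_isChain hne hchain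
      (fun K hK => (hc hK).1) (fun K hK => (hc hK).2.1) hlim
    exact (hc hK).2.2 hKclosed
  obtain ⟨K, -, hK⟩ := zorn_superset_nonempty bad hbad_chain univ
    ⟨isClosed_univ, fun _ => mapsTo_univ _ _, by rwa [inter_univ]⟩
  refine hK.prop.2.2 (h.isClosed_unstableSet_inter_of_forall_ssubset hK.prop.1 hK.prop.2.1
    fun K' hK'K hK' hK'inv => by_contra fun hK'bad => ?_)
  exact hK.not_prop_of_ssubset hK'K ⟨hK', hK'inv, hK'bad⟩

theorem exists_isClosed_trappedSet_eq_unstableSet (h : IsMorsePair Φ P Q) :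
    ∃ N, IsClosed N ∧ unstableSet Φ P ⊆ interior N ∧
      trappedSet Φ (Iio 0) N = unstableSet Φ P := by
  obtain ⟨N, hN, -, hPN, hNQ⟩ :=
    h.exists_isClosed_nhd (K := univ) (by simpa using h.isClosed_unstableSet)
  rw [inter_univ] at hPN
  exact ⟨N, hN, hPN, Subset.antisymm (h.trappedSet_Iio_subset_unstableSet hN hNQ 0)
    fun x hx t _ => interior_subset (hPN (isInvariant_unstableSet Φ P t hx))⟩

end IsMorsePair

end MorsePair

section SmaleOrder

variable {X : Type*} [MetricSpace X] {Φ : Flow ℝ X}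

theorem isAttractor_trappedSet_Iio [CompactSpace X] {N : Set X} (hN : IsClosed N)
    (hNint : trappedSet Φ (Iio 0) N ⊆ interior N) :
    IsAttractor (fun t x => Φ t x) (trappedSet Φ (Iio 0) N) := by
  have hA : IsClosed (trappedSet Φ (Iio 0) N) := isClosed_trappedSet Φ _ hN
  have hinv : IsInvariant Φ (trappedSet Φ (Iio 0) N) := isInvariant_trappedSet_Iio hN hNint
  have himage : ∀ t, Φ t '' trappedSet Φ (Iio 0) N = trappedSet Φ (Iio 0) N :=
    (Φ.isInvariant_iff_image_eq _).1 hinv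
  obtain ⟨U, hU, hAU, hUN, hUint⟩ := exists_isClosed_mapsTo_interior hA hinv.isForwardInvariant
    (trappedSet_Iio_subset_interior_trappedSet_Ici hN hNint)
    fun V hV => exists_forall_apply_mem_of_trappedSet_subset hN hV
  refine ⟨hA.isCompact, himage, U, hAU, fun t ht => ?_, Subset.antisymm ?_ fun x hx t ht => ?_⟩
  · rw [hU.closure_eq]
    exact (hUint t ht).image_subset
  · refine subset_iInter₂ fun t _ => ?_
    rw [← himage t]
    exact image_mono (hAU.trans interior_subset)
  · obtain ⟨y, hy, rfl⟩ := mem_iInter₂.1 hx (-t) (neg_nonneg.2 (mem_Iio.1 ht).le)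
    have := hUN hy 0 (mem_Ici.2 le_rfl)
    simpa [← Φ.map_add] using this

theorem mem_wMinus_singleton {p x : X} : x ∈ wMinus Φ {p} ↔ Tendsto (Φ · x) atBot (𝓝 p) := by
  simp only [wMinus, mem_ofPred_eq, tendsto_iff_edist_tendsto_0]
  exact iff_of_eq (congrArg (Tendsto · atBot (𝓝 0)) (funext fun _ => Metric.infEDist_singleton))

theorem mem_wPlus_singleton {p x : X} : x ∈ wPlus Φ {p} ↔ Tendsto (Φ · x) atTop (𝓝 p) := by
  simp only [wPlus, mem_ofPred_eq, tendsto_iff_edist_tendsto_0]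
  exact iff_of_eq (congrArg (Tendsto · atTop (𝓝 0)) (funext fun _ => Metric.infEDist_singleton))

theorem mem_fixedPoints_of_tendsto {l : Filter ℝ} [l.NeBot] {p x : X}
    (hl : ∀ s : ℝ, Tendsto (s + ·) l l) (h : Tendsto (Φ · x) l (𝓝 p)) : p ∈ fixedPoints Φ := by
  intro s
  have hshift : Tendsto (fun t => Φ s (Φ t x)) l (𝓝 p) := by
    simpa only [Function.comp_def, Φ.map_add] using h.comp (hl s)
  exact tendsto_nhds_unique (((Φ.continuous_toFun s).tendsto p).comp h) hshift

theorem pairwise_disjoint_wMinus (Φ : Flow ℝ X) :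
    Pairwise (Function.onFun Disjoint fun p => wMinus Φ {p}) :=
  fun _ _ hpq => disjoint_left.2 fun _ hp hq => hpq <|
    tendsto_nhds_unique (mem_wMinus_singleton.1 hp) (mem_wMinus_singleton.1 hq)

theorem mem_wMinus_singleton_iff_eq {p x : X} (hx : x ∈ fixedPoints Φ) :
    x ∈ wMinus Φ {p} ↔ x = p := by
  rw [mem_wMinus_singleton, funext hx, tendsto_const_nhds_iff]

theorem biUnion_wMinus_inter_fixedPoints {L : Set X} (hL : L ⊆ fixedPoints Φ) :
    (⋃ x ∈ L, wMinus Φ {x}) ∩ fixedPoints Φ = L := by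
  ext x
  simp only [mem_inter_iff, mem_iUnion₂]
  refine ⟨fun ⟨⟨p, hp, hxp⟩, hx⟩ => (mem_wMinus_singleton_iff_eq hx).1 hxp ▸ hp, fun hx =>
    ⟨⟨x, hx, (mem_wMinus_singleton_iff_eq (hL hx)).2 rfl⟩, hL hx⟩⟩

theorem biUnion_wMinus_subset_unstableSet (L : Set X) :
    ⋃ x ∈ L, wMinus Φ {x} ⊆ unstableSet Φ L :=
  iUnion₂_subset fun _ hp _ hx =>
    tendsto_nhdsSet_of_tendsto_nhds hp (mem_wMinus_singleton.1 hx)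

theorem exists_mem_fixedPoints_mem_wMinus (hconv : allOrbitsConverge Φ) (x : X) :
    ∃ p ∈ fixedPoints Φ, x ∈ wMinus Φ {p} := by
  obtain ⟨p, hp⟩ := (hconv x).2
  exact ⟨p, mem_fixedPoints_of_tendsto (fun s => tendsto_atBot_add_const_left _ s tendsto_id) hp,
    mem_wMinus_singleton.2 hp⟩

theorem exists_mem_fixedPoints_mem_wPlus (hconv : allOrbitsConverge Φ) (x : X) :
    ∃ q ∈ fixedPoints Φ, x ∈ wPlus Φ {q} := by
  obtain ⟨q, hq⟩ := (hconv x).1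
  exact ⟨q, mem_fixedPoints_of_tendsto (fun s => tendsto_atTop_add_const_left _ s tendsto_id) hq,
    mem_wPlus_singleton.2 hq⟩

theorem unstableSet_eq_biUnion_wMinus (hconv : allOrbitsConverge Φ) {L : Set X}
    (hL : IsClosed L) : unstableSet Φ L = ⋃ x ∈ L, wMinus Φ {x} := by
  refine Subset.antisymm (fun x hx => ?_) (biUnion_wMinus_subset_unstableSet L)
  obtain ⟨p, -, hxp⟩ := exists_mem_fixedPoints_mem_wMinus hconv x
  refine mem_biUnion (by_contra fun hpL => ?_) hxp
  have hdisj : Disjoint (𝓝 p) (𝓝ˢ L) := disjoint_nhds_nhdsSet.2 (hL.closure_eq.symm ▸ hpL)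
  exact ((mem_wMinus_singleton.1 hxp).not_tendsto hdisj) hx

theorem IsSmaleLowerSet.isMorsePair (hconv : allOrbitsConverge Φ) {L : Set X}
    (hL : IsSmaleLowerSet Φ L) (hLclosed : IsClosed L)
    (hLcompl : IsClosed (fixedPoints Φ \ L)) : IsMorsePair Φ L (fixedPoints Φ \ L) where
  isClosed_lower := hLclosed
  isClosed_upper := hLcompl
  disjoint := disjoint_sdiff_right
  isInvariant_upper t x hx := by rwa [hx.1 t]
  unstableSet_union := by
    rw [unstableSet_eq_biUnion_wMinus hconv hLclosed, unstableSet_eq_biUnion_wMinus hconv hLcompl,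
      ← biUnion_union, union_sdiff_cancel hL.1]
    exact eq_univ_of_forall fun x => mem_iUnion₂.2 <| by
      simpa using exists_mem_fixedPoints_mem_wMinus hconv x
  unstableSet_subset_stableSet x hx := by
    rw [unstableSet_eq_biUnion_wMinus hconv hLclosed] at hx
    obtain ⟨p, hp, hxp⟩ := mem_iUnion₂.1 hx
    obtain ⟨q, hq, hxq⟩ := exists_mem_fixedPoints_mem_wPlus hconv x
    have hqL : q ∈ L := hL.2 p hp q hq (.single ⟨hq, hL.1 hp, x, hxp, hxq⟩)
    exact tendsto_nhdsSet_of_tendsto_nhds hqL (mem_wPlus_singleton.1 hxq)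

theorem IsSmaleLowerSet.isAttractor [CompactSpace X] (hconv : allOrbitsConverge Φ) {L : Set X}
    (hL : IsSmaleLowerSet Φ L) (hLclosed : IsClosed L)
    (hLcompl : IsClosed (fixedPoints Φ \ L)) :
    IsAttractor (fun t x => Φ t x) (⋃ x ∈ L, wMinus Φ {x}) := by
  obtain ⟨N, hN, hLN, hNL⟩ :=
    (hL.isMorsePair hconv hLclosed hLcompl).exists_isClosed_trappedSet_eq_unstableSet
  rw [← unstableSet_eq_biUnion_wMinus hconv hLclosed, ← hNL]
  exact isAttractor_trappedSet_Iio hN (hNL ▸ hLN)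

namespace IsAttractor

variable {A : Set X}

theorem isInvariant (hA : IsAttractor (fun t x => Φ t x) A) : IsInvariant Φ A :=
  (Φ.isInvariant_iff_image_eq A).2 hA.2.1

theorem unstableSet_subset (hA : IsAttractor (fun t x => Φ t x) A) : unstableSet Φ A ⊆ A := by
  obtain ⟨-, -, U, hAU, hU, hAeq⟩ := hA
  intro x (hx : Tendsto (Φ · x) atBot (𝓝ˢ A))
  have hxU : ∀ᶠ s in atBot, Φ s x ∈ U := hx (subset_interior_iff_mem_nhdsSet.1 hAU)
  rw [hAeq]
  refine mem_iInter₂.2 fun t _ => ⟨Φ (-t) x, ?_, by simp [← Φ.map_add]⟩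
  obtain ⟨s, hsU, hst⟩ := (hxU.and (eventually_lt_atBot (-t))).exists
  have hmem : Φ (-t - s) (Φ s x) ∈ interior U :=
    hU (-t - s) (sub_pos.2 hst) (mem_image_of_mem _ (subset_closure hsU))
  rw [← Φ.map_add, sub_add_cancel] at hmem
  exact interior_subset hmem

theorem wMinus_singleton_subset (hA : IsAttractor (fun t x => Φ t x) A) {p : X} (hp : p ∈ A) :
    wMinus Φ {p} ⊆ A :=
  ((subset_biUnion_of_mem hp).trans (biUnion_wMinus_subset_unstableSet A)).trans
    hA.unstableSet_subset

theorem mem_of_tendsto (hA : IsAttractor (fun t x => Φ t x) A) {l : Filter ℝ} [l.NeBot] {x p : X}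
    (hx : x ∈ A) (h : Tendsto (Φ · x) l (𝓝 p)) : p ∈ A :=
  hA.1.isClosed.mem_of_tendsto h (.of_forall fun t => hA.isInvariant t hx)

theorem isSmaleLowerSet (hA : IsAttractor (fun t x => Φ t x) A) :
    IsSmaleLowerSet Φ (A ∩ fixedPoints Φ) := by
  refine ⟨inter_subset_right, fun y hy x hx hxy => ⟨?_, hx⟩⟩
  clear hx
  induction hxy using Relation.ReflTransGen.head_induction_on with
  | refl => exact hy.1
  | head hstep _ ih =>
    obtain ⟨-, -, z, hz_minus, hz_plus⟩ := hstep
    exact hA.mem_of_tendsto (hA.wMinus_singleton_subset ih hz_minus)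
      (mem_wPlus_singleton.1 hz_plus)

theorem eq_biUnion_wMinus (hconv : allOrbitsConverge Φ)
    (hA : IsAttractor (fun t x => Φ t x) A) : A = ⋃ x ∈ A ∩ fixedPoints Φ, wMinus Φ {x} := by
  refine Subset.antisymm (fun x hx => ?_)
    (iUnion₂_subset fun p hp => hA.wMinus_singleton_subset hp.1)
  obtain ⟨p, hp, hxp⟩ := exists_mem_fixedPoints_mem_wMinus hconv x
  exact mem_biUnion ⟨hA.mem_of_tendsto hx (mem_wMinus_singleton.1 hxp), hp⟩ hxp

end IsAttractor

end SmaleOrder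

theorem lowerSets_equiv_attractors_general (Φ : Flow ℝ M) (hconv : allOrbitsConverge Φ)
    (hclopen : ∀ L : Set M, IsSmaleLowerSet Φ L → IsClosed L ∧ IsClosed (fixedPoints Φ \ L)) :
    (∀ L : Set M, IsSmaleLowerSet Φ L →
      IsAttractor (fun t x => Φ t x) (⋃ x ∈ L, wMinus Φ {x})) ∧
    (∀ A : Set M, IsAttractor (fun t x => Φ t x) A →
      ∃! L : Set M, IsSmaleLowerSet Φ L ∧ A = ⋃ x ∈ L, wMinus Φ {x}) ∧
    (∀ L₁ L₂ : Set M, IsSmaleLowerSet Φ L₁ → IsSmaleLowerSet Φ L₂ →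
      (⋃ x ∈ L₁ ∪ L₂, wMinus Φ {x})
          = (⋃ x ∈ L₁, wMinus Φ {x}) ∪ ⋃ x ∈ L₂, wMinus Φ {x} ∧
      (⋃ x ∈ L₁ ∩ L₂, wMinus Φ {x})
          = (⋃ x ∈ L₁, wMinus Φ {x}) ∩ ⋃ x ∈ L₂, wMinus Φ {x}) := by
  refine ⟨fun L hL => hL.isAttractor hconv (hclopen L hL).1 (hclopen L hL).2, fun A hA => ?_,
    fun L₁ L₂ _ _ => ⟨biUnion_union L₁ L₂ _, ?_⟩⟩
  · refine ⟨A ∩ fixedPoints Φ, ⟨hA.isSmaleLowerSet, hA.eq_biUnion_wMinus hconv⟩, ?_⟩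
    rintro L ⟨hL, rfl⟩
    exact (biUnion_wMinus_inter_fixedPoints hL.1).symm
  · exact biUnion_inter_of_pairwise_disjoint (pairwise_disjoint_wMinus Φ) L₁ L₂

/-- Suppose every flow line has a sink and a source, the fixed-point
set is finite, and the Smale order is antisymmetric.  Then `L ↦ A_L = ⋃_{x ∈ L} W⁻(x)`
is a bijection from the lower sets of `(M_fix, ≼)` onto the attractors of `Φ`, and a
lattice isomorphism: it maps unions to unions and intersections to intersections; in
particular every attractor equals `A_L` for a unique lower set `L`. -/
theorem lowerSets_equiv_attractors
    {M : Type*} [MetricSpace M] [CompactSpace M] (Φ : Flow ℝ M)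
    (hconv : allOrbitsConverge Φ)
    (hfin : (fixedPoints Φ).Finite)
    (hanti : ∀ x y : M, smaleLe Φ x y → smaleLe Φ y x → x = y) :
    (∀ L : Set M, IsSmaleLowerSet Φ L →
      IsAttractor (fun t x => Φ t x) (⋃ x ∈ L, wMinus Φ {x})) ∧
    (∀ A : Set M, IsAttractor (fun t x => Φ t x) A →
      ∃! L : Set M, IsSmaleLowerSet Φ L ∧ A = ⋃ x ∈ L, wMinus Φ {x}) ∧
    (∀ L₁ L₂ : Set M, IsSmaleLowerSet Φ L₁ → IsSmaleLowerSet Φ L₂ →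
      (⋃ x ∈ L₁ ∪ L₂, wMinus Φ {x})
          = (⋃ x ∈ L₁, wMinus Φ {x}) ∪ ⋃ x ∈ L₂, wMinus Φ {x} ∧
      (⋃ x ∈ L₁ ∩ L₂, wMinus Φ {x})
          = (⋃ x ∈ L₁, wMinus Φ {x}) ∩ ⋃ x ∈ L₂, wMinus Φ {x}) :=
  lowerSets_equiv_attractors_general Φ hconv fun _ hL =>
    ⟨(hfin.subset hL.1).isClosed, hfin.sdiff.isClosed⟩
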